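/- There exist absolute constants C > 0 and c > 0 with the following property. For every integer d ≥ 1 and every integer n ≥ d^{1/2}·π/(4C), there exists a finite set 𝒞 ⊂ S^d with |𝒞| ≤ c · d^{1/2} (4n/π)^d such that for every P ∈ Π_n^d: (1/2)·sup_{y ∈ S^d}|P(y)| ≤ max_{z ∈ 𝒞} |P(z)| ≤ sup_{y ∈ S^d}|P(y)|. -/

import Mathlib

noncomputable section

open MeasureTheory Real Set
open scoped RealInnerProductSpace

/-- Value at `x` of the orthonormalized Jacobi polynomial `p_n^{(α,β)}`. -/
def jacobiP (α β : ℝ) (n : ℕ) (x : ℝ) : ℝ :=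
  Real.sqrt ((2 * (n : ℝ) + α + β + 1) / 2 ^ (α + β + 1) *
      (Real.Gamma ((n : ℝ) + α + β + 1) * (n.factorial : ℝ) /
        (Real.Gamma ((n : ℝ) + α + 1) * Real.Gamma ((n : ℝ) + β + 1)))) *
    (Real.Gamma (α + n + 1) / ((n.factorial : ℝ) * Real.Gamma (α + β + n + 1))) *
    ∑ m ∈ Finset.range (n + 1),
      (n.choose m : ℝ) * (Real.Gamma (α + β + n + m + 1) / Real.Gamma (α + m + 1)) *
        ((x - 1) / 2) ^ m

/-- The kernel `K_n^{(α,β)}(x) = Σ_{ℓ<n} p_ℓ^{(α,β)}(1) p_ℓ^{(α,β)}(x)`. -/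
def jacobiK (α β : ℝ) (n : ℕ) (x : ℝ) : ℝ :=
  ∑ ℓ ∈ Finset.range n, jacobiP α β ℓ 1 * jacobiP α β ℓ x

/-- The unit sphere `S^d ⊂ ℝ^{d+1}`. -/
abbrev Sph (d : ℕ) := Metric.sphere (0 : EuclideanSpace ℝ (Fin (d + 1))) 1

/-- The rotation invariant Riemannian volume probability measure `μ_d^*` on `S^d`. -/
def sphMeasure (d : ℕ) : Measure (Sph d) :=
  ((volume : Measure (EuclideanSpace ℝ (Fin (d + 1)))).toSphere Set.univ)⁻¹ •
    (volume : Measure (EuclideanSpace ℝ (Fin (d + 1)))).toSphere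

/-- `f : S^d → ℝ` is the restriction to the sphere of an algebraic polynomial in `d+1`
variables of total degree `< n`, i.e. `f ∈ Π_n^d`. -/
def IsSphPoly (d : ℕ) (n : ℝ) (f : Sph d → ℝ) : Prop :=
  ∃ p : MvPolynomial (Fin (d + 1)) ℝ, (p.totalDegree : ℝ) < n ∧
    ∀ y : Sph d, f y = MvPolynomial.eval (fun i => (y : EuclideanSpace ℝ (Fin (d + 1))) i) p

/-- Integral of `f` with respect to a signed measure (via the Jordan decomposition). -/
def sInt {X : Type*} [MeasurableSpace X] (ν : SignedMeasure X) (f : X → ℝ) : ℝ :=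
  (∫ x, f x ∂ν.toJordanDecomposition.posPart) - ∫ x, f x ∂ν.toJordanDecomposition.negPart

/-- Integral of `f` over a set `s` with respect to a signed measure. -/
def sIntOn {X : Type*} [MeasurableSpace X] (ν : SignedMeasure X) (s : Set X) (f : X → ℝ) : ℝ :=
  (∫ x in s, f x ∂ν.toJordanDecomposition.posPart) -
    ∫ x in s, f x ∂ν.toJordanDecomposition.negPart

/-- `ν` is a quadrature measure of order `n` on `S^d`. -/
def IsQuadrature (d : ℕ) (n : ℝ) (ν : SignedMeasure (Sph d)) : Prop :=
  ∀ f : Sph d → ℝ, IsSphPoly d n f → sInt ν f = ∫ y, f y ∂sphMeasure d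

/-- `ν` satisfies the Marcinkiewicz-Zygmund inequality of order `n` with constant `c`;
`ν ∈ MZ(d;n)` means this holds for some `c`, and `|||ν|||_{d;n}` is the least such `c`. -/
def IsMZ (d : ℕ) (n : ℝ) (ν : SignedMeasure (Sph d)) (c : ℝ) : Prop :=
  ∀ f : Sph d → ℝ, IsSphPoly d (n / 2) f →
    (∫ y, (f y) ^ 2 ∂ν.totalVariation) ≤ c * ∫ y, (f y) ^ 2 ∂sphMeasure d

/-- `ω_d`, the volume of `S^d`. -/
def omegaS (d : ℕ) : ℝ := 2 * Real.pi ^ (((d : ℝ) + 1) / 2) / Real.Gamma (((d : ℝ) + 1) / 2)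

/-- The reproducing kernel `K_{d;n}` of `Π_n^d`. -/
def sphK (d n : ℕ) (x : ℝ) : ℝ :=
  (omegaS d / omegaS (d - 1)) * jacobiK ((d : ℝ) / 2 - 1) ((d : ℝ) / 2 - 1) n x

/-- The kernel `Φ̃_{d;n,r}`. -/
def PhiTilde (d n : ℕ) (r : ℝ) (x : ℝ) : ℝ :=
  sphK d ((d + 2) * n) x *
    (jacobiP ((d : ℝ) / 2 + r) ((d : ℝ) / 2 - 2) (d * n) x /
      jacobiP ((d : ℝ) / 2 + r) ((d : ℝ) / 2 - 2) (d * n) 1)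

/-- The kernel `Φ_{d;n,r}`. -/
def Phi (d n : ℕ) (r : ℝ) (x : ℝ) : ℝ := PhiTilde d n r x * ((1 + x) / 2) ^ n

/-- The inner product `x·y` of two points of `S^d`. -/
def ip {d : ℕ} (x y : Sph d) : ℝ :=
  ⟪(x : EuclideanSpace ℝ (Fin (d + 1))), (y : EuclideanSpace ℝ (Fin (d + 1)))⟫

/-- The operator `σ_{d;n,r}(ν, f)`. -/
def sigmaOp (d n : ℕ) (r : ℝ) (ν : SignedMeasure (Sph d)) (f : Sph d → ℝ) (x : Sph d) : ℝ :=
  sInt ν (fun y => f y * Phi d n r (ip x y))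

/-- The operator `σ̃_{d;n,r}(ν, f)`. -/
def sigmaTildeOp (d n : ℕ) (r : ℝ) (ν : SignedMeasure (Sph d)) (f : Sph d → ℝ) (x : Sph d) : ℝ :=
  sInt ν (fun y => f y * PhiTilde d n r (ip x y))

/-- The uniform (supremum) norm `‖f‖_∞`. -/
def supNorm {X : Type*} (f : X → ℝ) : ℝ := sSup (Set.range fun x => |f x|)

/-- `E_{d;n}(f)`, the degree of approximation of `f` from `Π_n^d` in the uniform norm. -/
def bestApprox (d : ℕ) (n : ℝ) (f : Sph d → ℝ) : ℝ :=
  sInf {t | ∃ g, IsSphPoly d n g ∧ ∀ y, |f y - g y| ≤ t}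

/-- `dim Π_n^d = (2n+d−2)·Γ(n+d−1)/(Γ(n)·Γ(d+1))` (for `n ≥ 2`). -/
def dimPi (d n : ℕ) : ℝ :=
  (2 * (n : ℝ) + d - 2) * Real.Gamma ((n : ℝ) + d - 1) /
    (Real.Gamma n * Real.Gamma ((d : ℝ) + 1))


theorem re_logDeriv_le (f : Polynomial ℂ) (N : ℕ) (hN : f.natDegree ≤ N)
    (hr : ∀ w, ‖w‖ ≤ 1 → f.eval w ≠ 0) (z : ℂ) (hz : ‖z‖ = 1) :
    (z * (f.derivative.eval z / f.eval z)).re ≤ N / 2 := by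
  rw [(IsAlgClosed.splits f).eval_derivative_div_eval_of_ne_zero (hr z hz.le)]
  have hf0 : f ≠ 0 := by rintro rfl; exact hr 0 (by simp) (by simp)
  have key : ∀ s : Multiset ℂ, (∀ w ∈ s, 1 < ‖w‖) →
      (z * (s.map fun w => 1 / (z - w)).sum).re ≤ (Multiset.card s : ℝ) / 2 := by
    intro s
    induction s using Multiset.induction_on with
    | empty => simp
    | cons a s ih =>
      intro h
      have h1 := ih (fun w hw => h w (Multiset.mem_cons_of_mem hw))
      have h2 := h a (Multiset.mem_cons_self _ _)
      have h3 : (z * (1 / (z - a))).re ≤ 1 / 2 := by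
        have hz2 : Complex.normSq z = 1 := by rw [Complex.normSq_eq_norm_sq, hz]; norm_num
        have ha2 : 1 < Complex.normSq a := by rw [Complex.normSq_eq_norm_sq]; nlinarith
        have hne : z - a ≠ 0 := by
          intro h0
          rw [sub_eq_zero] at h0
          rw [h0] at hz; linarith
        have hp : 0 < Complex.normSq (z - a) := Complex.normSq_pos.2 hne
        have : (z * (1 / (z - a))).re = (z.re * (z.re - a.re) + z.im * (z.im - a.im)) /
            Complex.normSq (z - a) := by
          rw [mul_one_div, Complex.div_re]
          simp only [Complex.sub_re, Complex.sub_im]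
          ring
        rw [this, div_le_iff₀ hp]
        rw [Complex.normSq_apply] at *
        simp only [Complex.sub_re, Complex.sub_im] at *
        nlinarith
      simp only [Multiset.map_cons, Multiset.sum_cons, mul_add, Complex.add_re, Multiset.card_cons]
      push_cast
      linarith
  have h1 := key f.roots (fun w hw => by
    by_contra hle
    exact hr w (not_lt.1 hle) ((Polynomial.mem_roots hf0).1 hw))
  have h2 : (Multiset.card f.roots : ℝ) ≤ N := by
    exact_mod_cast (Polynomial.card_roots' f).trans hN
  linarith

/-- `T` is a real trigonometric polynomial of degree `≤ n`. -/
def IsTrig (n : ℕ) (T : ℝ → ℝ) : Prop :=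
  ∃ q : Polynomial ℂ, q.natDegree ≤ 2 * n ∧
    ∀ t : ℝ, q.eval (Complex.exp (t * Complex.I)) = Complex.exp (t * Complex.I) ^ n * (T t : ℂ)

theorem bernstein_szego (n : ℕ) (hn : 1 ≤ n) (T T' : ℝ → ℝ) (hT : IsTrig n T)
    (hd : ∀ t, HasDerivAt T (T' t) t) (hb : ∀ t, |T t| ≤ 1) (t : ℝ) :
    (n * T t) ^ 2 + (T' t) ^ 2 ≤ (n : ℝ) ^ 2 := by
  obtain ⟨q, hq, hqT⟩ := hT
  have hn0 : (0 : ℝ) < n := by exact_mod_cast hn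
  set z := Complex.exp (t * Complex.I) with hzdef
  have hz : ‖z‖ = 1 := Complex.norm_exp_ofReal_mul_I t
  have hz0 : z ≠ 0 := Complex.exp_ne_zero _
  -- derivative identity
  have hderiv : z * q.derivative.eval z = z ^ n * (n * T t - T' t * Complex.I) := by
    have he : HasDerivAt (fun s : ℝ => Complex.exp (s * Complex.I)) (z * Complex.I) t := by
      have h1 : HasDerivAt (fun s : ℝ => (s : ℂ) * Complex.I) Complex.I t := by
        simpa using (Complex.ofRealCLM.hasDerivAt (x := t)).mul_const Complex.I
      exact h1.cexp
    have hL : HasDerivAt (fun s : ℝ => q.eval (Complex.exp (s * Complex.I)))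
        (q.derivative.eval z * (z * Complex.I)) t :=
      HasDerivAt.comp (h₂ := fun w : ℂ => q.eval w) t (q.hasDerivAt z) he
    have hR : HasDerivAt (fun s : ℝ => Complex.exp (s * Complex.I) ^ n * (T s : ℂ))
        (n * z ^ (n - 1) * (z * Complex.I) * (T t : ℂ) + z ^ n * (T' t : ℂ)) t :=
      (he.pow n).mul (hd t).ofReal_comp
    have hu := hL.unique (by simpa only [hqT] using hR)
    obtain ⟨k, rfl⟩ : ∃ k, n = k + 1 := ⟨n - 1, by omega⟩
    simp only [Nat.add_sub_cancel] at hu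
    have hI := Complex.I_sq
    linear_combination (-Complex.I) * hu - (z ^ (k+1) * ((k+1 : ℕ) : ℂ) * T t
      - z * q.derivative.eval z) * hI
  -- max modulus
  have hcirc : ∀ w : ℂ, ‖w‖ = 1 → ‖q.eval w‖ ≤ 1 := by
    intro w hw
    have : w = Complex.exp ((Complex.arg w : ℂ) * Complex.I) := by
      have := Complex.norm_mul_exp_arg_mul_I w
      rw [hw] at this; simpa using this.symm
    rw [this, hqT, norm_mul, norm_pow, Complex.norm_exp_ofReal_mul_I, one_pow, one_mul,
      Complex.norm_real]
    exact hb _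
  have hdisc : ∀ w : ℂ, ‖w‖ ≤ 1 → ‖q.eval w‖ ≤ 1 := by
    intro w hw
    refine Complex.norm_le_of_forall_mem_frontier_norm_le (f := fun w => q.eval w)
      (U := Metric.ball (0 : ℂ) 1) Metric.isBounded_ball
      (q.differentiable.diffContOnCl) ?_ ?_
    · intro x hx
      rw [frontier_ball _ one_ne_zero] at hx
      exact hcirc x (by simpa using hx)
    · rw [closure_ball _ one_ne_zero]; simpa using hw
  have main : ∀ u v : ℝ, 1 < u ^ 2 + v ^ 2 → n * T t * u + T' t * v ≤ n * (u ^ 2 + v ^ 2) := by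
    intro u v huv
    set m : ℂ := ⟨u, v⟩ with hm
    have hmn : 1 < ‖m‖ := by
      rw [← Real.sqrt_one, Complex.norm_def, Complex.normSq_apply]
      apply Real.sqrt_lt_sqrt (by norm_num)
      simp only [hm]; nlinarith
    have h1 := re_logDeriv_le (q - Polynomial.C (z ^ n * m)) (2 * n)
      ((Polynomial.natDegree_sub_C).le.trans hq) (by
        intro w hw h0
        simp only [Polynomial.eval_sub, Polynomial.eval_C, sub_eq_zero] at h0
        have := hdisc w hw
        rw [h0, norm_mul, norm_pow, hz] at this
        simp at this; linarith) z hz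
    simp only [Polynomial.derivative_sub, Polynomial.derivative_C, sub_zero, Polynomial.eval_sub,
      Polynomial.eval_C] at h1
    rw [hqT t, ← hzdef, ← mul_sub, ← mul_div_assoc, hderiv, mul_div_mul_left _ _ (pow_ne_zero _ hz0)] at h1
    have hTm : ‖(T t : ℂ)‖ ≤ 1 := by rw [Complex.norm_real]; exact hb t
    have hne : (T t : ℂ) - m ≠ 0 := by
      intro h0; rw [sub_eq_zero] at h0; rw [h0] at hTm; linarith
    have hp := Complex.normSq_pos.2 hne
    rw [Complex.div_re, ← add_div, div_le_iff₀ hp] at h1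
    rw [Complex.normSq_apply] at h1
    simp [hm] at h1
    nlinarith
  by_contra hcon
  push Not at hcon
  set A := Real.sqrt ((n * T t) ^ 2 + (T' t) ^ 2) with hA
  have hA2 : A ^ 2 = (n * T t) ^ 2 + (T' t) ^ 2 := Real.sq_sqrt (by positivity)
  have hAn : (n : ℝ) < A := Real.lt_sqrt_of_sq_lt hcon
  have hA0 : 0 < A := hn0.trans hAn
  obtain ⟨k, hk1, hk2⟩ := exists_between (one_div_lt_one_div_of_lt hn0 hAn)
  have hk0 : 0 < k := (by positivity : 0 < 1 / A).trans hk1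
  have hkA : 1 < k * A := by rwa [div_lt_iff₀ hA0] at hk1
  have hkn : k * n < 1 := by rwa [lt_div_iff₀ hn0] at hk2
  have e : (n * T t * k) ^ 2 + (T' t * k) ^ 2 = (k * A) ^ 2 := by rw [mul_pow k A, hA2]; ring
  have := main (n * T t * k) (T' t * k) (by rw [e]; nlinarith)
  rw [e] at this
  have e2 : n * T t * (n * T t * k) + T' t * (T' t * k) = k * A ^ 2 := by rw [hA2]; ring
  rw [e2] at this
  have : k * A ^ 2 * (1 - k * n) ≤ 0 := by linarith
  have : 0 < k * A ^ 2 * (1 - k * n) := by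
    have : 0 < 1 - k * n := by linarith
    positivity
  linarith

theorem trig_near_max (n : ℕ) (hn : 1 ≤ n) (T T' : ℝ → ℝ) (hT : IsTrig n T)
    (hd : ∀ t, HasDerivAt T (T' t) t) (hb : ∀ t, |T t| ≤ 1) (h0 : T 0 = 1) (t : ℝ) (ht : 0 ≤ t)
    (hnt : n * t ≤ π / 3) : 1 / 2 ≤ T t := by
  have hn0 : (0 : ℝ) < n := by exact_mod_cast hn
  have key : ∀ s : ℝ, 0 < s → s < 1 → arcsin s - n * t ≤ arcsin (s * T t) := by
    intro s hs0 hs1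
    have hlt : ∀ x, (s * T x) ^ 2 < 1 := by
      intro x
      have := sq_le_one_iff_abs_le_one (T x) |>.2 (hb x)
      rw [mul_pow]
      have h2 : s ^ 2 < 1 := by nlinarith
      nlinarith [mul_le_mul_of_nonneg_left this (sq_nonneg s)]
    have hder : ∀ x, HasDerivAt (fun x => arcsin (s * T x))
        (1 / √(1 - (s * T x) ^ 2) * (s * T' x)) x := by
      intro x
      have h := hlt x
      exact (Real.hasDerivAt_arcsin (by intro h'; rw [h'] at h; norm_num at h)
        (by intro h'; rw [h'] at h; norm_num at h)).comp x ((hd x).const_mul s)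
    have hbd : ∀ x, ‖1 / √(1 - (s * T x) ^ 2) * (s * T' x)‖ ≤ n := by
      intro x
      have h := hlt x
      have hpos : 0 < √(1 - (s * T x) ^ 2) := Real.sqrt_pos.2 (by linarith)
      rw [one_div, norm_mul, norm_inv, Real.norm_of_nonneg hpos.le, inv_mul_le_iff₀ hpos,
        Real.norm_eq_abs]
      apply abs_le_of_sq_le_sq _ (by positivity)
      rw [mul_pow, mul_pow, Real.sq_sqrt (by linarith)]
      have := bernstein_szego n hn T T' hT hd hb x
      have hs2 : s ^ 2 ≤ 1 := by nlinarith
      nlinarith [mul_le_mul_of_nonneg_left this (sq_nonneg s), mul_nonneg (sq_nonneg (n:ℝ)) (sub_nonneg.2 hs2)]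
    have := Convex.norm_image_sub_le_of_norm_hasDerivWithin_le (s := univ) (x := 0) (y := t)
      (fun x _ => (hder x).hasDerivWithinAt) (fun x _ => hbd x) convex_univ (mem_univ _) (mem_univ _)
    rw [h0, mul_one, sub_zero, Real.norm_eq_abs, Real.norm_eq_abs, abs_of_nonneg ht] at this
    have := (abs_le.1 this).1
    linarith
  have lim : arcsin 1 - n * t ≤ arcsin (1 * T t) := by
    have c1 : Filter.Tendsto (fun s : ℝ => arcsin s - n * t) (nhdsWithin 1 (Iio 1))
      (nhds (arcsin 1 - n * t)) :=
      ((Real.continuous_arcsin.sub continuous_const).tendsto 1).mono_left nhdsWithin_le_nhds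
    have c2 : Filter.Tendsto (fun s : ℝ => arcsin (s * T t)) (nhdsWithin 1 (Iio 1))
      (nhds (arcsin (1 * T t))) :=
      ((Real.continuous_arcsin.comp (continuous_id.mul continuous_const)).tendsto 1).mono_left
        nhdsWithin_le_nhds
    refine le_of_tendsto_of_tendsto c1 c2 ?_
    filter_upwards [Ioo_mem_nhdsLT (show (0:ℝ) < 1 by norm_num)] with s hs
    exact key s hs.1 hs.2
  rw [one_mul, arcsin_one] at lim
  have h6 : π / 6 ≤ arcsin (T t) := by linarith
  have := (abs_le.1 (hb t))
  rw [Real.le_arcsin_iff_sin_le ⟨by linarith [pi_pos], by linarith [pi_pos]⟩ ⟨this.1, this.2⟩,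
    Real.sin_pi_div_six] at h6
  exact h6

theorem isTrig_circle {ι : Type*} [Fintype ι] (n : ℕ) (p : MvPolynomial ι ℝ)
    (hp : p.totalDegree ≤ n) (x u : ι → ℝ) :
    IsTrig n (fun t => MvPolynomial.eval (fun i => cos t * x i + sin t * u i) p) := by
  classical
  let l : ι → Polynomial ℂ := fun i =>
    Polynomial.C (((x i : ℂ) - Complex.I * u i) / 2) * Polynomial.X ^ 2 +
      Polynomial.C (((x i : ℂ) + Complex.I * u i) / 2)
  have hl : ∀ i, (l i).natDegree ≤ 2 := fun i => by
    simp only [l]; compute_degree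
  have hs : ∀ s ∈ p.support, ∑ i, s i ≤ n := by
    intro s hs
    have := MvPolynomial.le_totalDegree hs
    rw [Finsupp.sum_fintype _ _ (by simp)] at this
    omega
  refine ⟨∑ s ∈ p.support, Polynomial.C ((p.coeff s : ℝ) : ℂ) * Polynomial.X ^ (n - ∑ i, s i) *
    ∏ i, l i ^ s i, ?_, ?_⟩
  · refine Polynomial.natDegree_sum_le_of_forall_le _ _ fun s hsm => ?_
    have h1 : (∏ i, l i ^ s i).natDegree ≤ ∑ i, 2 * s i := by
      refine (Polynomial.natDegree_prod_le _ _).trans (Finset.sum_le_sum fun i _ => ?_)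
      refine Polynomial.natDegree_pow_le.trans ?_
      rw [mul_comm]; exact Nat.mul_le_mul_right _ (hl i)
    have h2 : (Polynomial.C ((p.coeff s : ℝ) : ℂ) * Polynomial.X ^ (n - ∑ i, s i)).natDegree
      ≤ n - ∑ i, s i := Polynomial.natDegree_C_mul_X_pow_le _ _
    have h3 := hs s hsm
    rw [← Finset.mul_sum] at h1
    refine Polynomial.natDegree_mul_le.trans ?_
    omega
  · intro t
    have hz0 : Complex.exp (t * Complex.I) ≠ 0 := Complex.exp_ne_zero _
    have hle : ∀ i, (l i).eval (Complex.exp (t * Complex.I)) =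
        Complex.exp (t * Complex.I) * ((cos t * x i + sin t * u i : ℝ) : ℂ) := by
      intro i
      simp only [l, Polynomial.eval_add, Polynomial.eval_mul, Polynomial.eval_C,
        Polynomial.eval_pow, Polynomial.eval_X]
      push_cast
      rw [Complex.exp_mul_I]
      have h1 := Complex.sin_sq_add_cos_sq (t : ℂ)
      have hI := Complex.I_sq
      set c := Complex.cos t
      set s := Complex.sin t
      have h2 : s ^ 2 = 1 - c ^ 2 := by linear_combination h1
      ring_nf
      rw [show Complex.I ^ 3 = - Complex.I by rw [pow_succ, hI]; ring, hI, h2]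
      ring
    rw [Polynomial.eval_finsetSum]
    simp only [MvPolynomial.eval_eq']
    push_cast
    rw [Finset.mul_sum]
    refine Finset.sum_congr rfl fun s hsm => ?_
    simp only [Polynomial.eval_mul, Polynomial.eval_C,
        Polynomial.eval_pow, Polynomial.eval_X, Polynomial.eval_prod, hle, mul_pow,
        Finset.prod_mul_distrib, Finset.prod_pow_eq_pow_sum]
    have : Complex.exp (t * Complex.I) ^ n = Complex.exp (t * Complex.I) ^ (n - ∑ i, s i) *
      Complex.exp (t * Complex.I) ^ (∑ i, s i) := by
      rw [← pow_add, Nat.sub_add_cancel (hs s hsm)]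
    rw [this]
    push_cast
    ring

theorem differentiable_circle {ι : Type*} [Fintype ι] (p : MvPolynomial ι ℝ) (x u : ι → ℝ) :
    Differentiable ℝ (fun t => MvPolynomial.eval (fun i => cos t * x i + sin t * u i) p) := by
  simp only [MvPolynomial.eval_eq']
  fun_prop

theorem sphere_near_max {ι : Type*} [Fintype ι] (n : ℕ) (hn : 2 ≤ n) (p : MvPolynomial ι ℝ)
    (hp : p.totalDegree ≤ n) (M : ℝ) (hM : 0 < M)
    (hb : ∀ y : EuclideanSpace ℝ ι, ‖y‖ = 1 → |MvPolynomial.eval (fun i => y i) p| ≤ M)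
    (x y : EuclideanSpace ℝ ι) (hx : ‖x‖ = 1) (hy : ‖y‖ = 1)
    (hxM : |MvPolynomial.eval (fun i => x i) p| = M) (hxy : ‖x - y‖ ≤ 1 / n) :
    1 / 2 * M ≤ |MvPolynomial.eval (fun i => y i) p| := by
  by_cases hxy' : x = y
  · rw [← hxy', hxM]; linarith
  have hn0 : (2 : ℝ) ≤ n := by exact_mod_cast hn
  have h1n : 1 / (n : ℝ) ≤ 1 / 2 := one_div_le_one_div_of_le (by norm_num) hn0
  set c := ⟪x, y⟫ with hc
  have hsq : ‖x - y‖ ^ 2 = 2 - 2 * c := by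
    rw [norm_sub_sq_real, hx, hy]; ring
  have hpos : 0 < ‖x - y‖ := norm_pos_iff.2 (sub_ne_zero.2 hxy')
  have hc1 : c < 1 := by nlinarith
  have hc0 : 0 < c := by nlinarith
  set θ := arccos c with hθ
  have hcos : cos θ = c := Real.cos_arccos (by linarith) (by linarith)
  have hθ0 : 0 < θ := by rw [hθ, Real.arccos_pos]; exact hc1
  have hθp : θ ≤ π := Real.arccos_le_pi _
  have hθpi : θ < π := lt_of_le_of_ne hθp (by intro h; rw [h, cos_pi] at hcos; linarith)
  have hsin : 0 < sin θ := Real.sin_pos_of_pos_of_lt_pi hθ0 hθpi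
  have hchord : ‖x - y‖ = 2 * sin (θ / 2) := by
    have h1 : 0 ≤ sin (θ / 2) := Real.sin_nonneg_of_nonneg_of_le_pi (by linarith) (by linarith)
    have h2 : ‖x - y‖ ^ 2 = (2 * sin (θ / 2)) ^ 2 := by
      have := Real.cos_sq (θ / 2)
      rw [hsq, mul_pow, Real.sin_sq, this, ← hcos]
      rw [show 2 * (θ / 2) = θ by ring]; ring
    exact (pow_left_inj₀ hpos.le (by positivity) two_ne_zero).1 h2
  have hnθ : n * θ ≤ π / 3 := by
    by_contra hcon
    push Not at hcon
    set φ := π / 3 / n with hφ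
    have hφθ : φ < θ := by rw [hφ, div_lt_iff₀ (by linarith)]; linarith
    have hφ0 : 0 < φ := by rw [hφ]; have := pi_pos; positivity
    have hφ1 : φ * n = π / 3 := by rw [hφ]; field_simp
    have hm : sin (φ / 2) < sin (θ / 2) :=
      Real.sin_lt_sin_of_lt_of_le_pi_div_two (by linarith [pi_pos]) (by linarith) (by linarith)
    have hs := Real.sin_gt_sub_cube (x := φ / 2) (by linarith)
    have h1 : φ - φ ^ 3 / 24 < 1 / n := by
      have : 2 * sin (φ / 2) < 1 / n := by linarith
      nlinarith
    rw [lt_div_iff₀ (by linarith)] at h1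
    have hφb : φ ≤ 3.15 / 6 := by
      have := pi_lt_d2
      nlinarith
    have h2 : (φ - φ ^ 3 / 24) * n = π / 3 * (1 - φ ^ 2 / 24) := by rw [← hφ1]; ring
    have := pi_gt_d2
    have h3 : φ ^ 2 ≤ 0.28 := by nlinarith
    have h4 : 3.14 / 3 * (1 - 0.28 / 24) ≤ π / 3 * (1 - φ ^ 2 / 24) := by gcongr
    rw [h2] at h1
    norm_num at h4
    linarith
  set u : EuclideanSpace ℝ ι := (sin θ)⁻¹ • (y - c • x) with hu
  have hyu : y = cos θ • x + sin θ • u := by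
    rw [hu, smul_smul, mul_inv_cancel₀ hsin.ne', one_smul, hcos]; abel
  have hxu : ⟪x, u⟫ = 0 := by
    rw [hu, real_inner_smul_right, inner_sub_right, real_inner_smul_right, real_inner_self_eq_norm_sq,
      hx, ← hc]; ring
  have hun : ‖u‖ = 1 := by
    have h := hy
    have h1 : ‖y‖ ^ 2 = cos θ ^ 2 * 1 + sin θ ^ 2 * ‖u‖ ^ 2 := by
      rw [hyu, norm_add_sq_real, norm_smul, norm_smul, real_inner_smul_left, real_inner_smul_right,
        hxu, hx, mul_pow, mul_pow]
      simp
    rw [hy] at h1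
    have h2 := Real.sin_sq_add_cos_sq θ
    have h3 : sin θ ^ 2 * ‖u‖ ^ 2 = sin θ ^ 2 * 1 := by linarith
    have h4 := mul_left_cancel₀ (by positivity) h3
    exact (pow_left_inj₀ (norm_nonneg _) zero_le_one two_ne_zero).1 (by rw [h4]; ring)
  have hγ : ∀ t, ‖cos t • x + sin t • u‖ = 1 := by
    intro t
    have h1 : ‖cos t • x + sin t • u‖ ^ 2 = 1 := by
      rw [norm_add_sq_real, norm_smul, norm_smul, real_inner_smul_left, real_inner_smul_right,
        hxu, hx, hun, mul_pow, mul_pow]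
      have := Real.sin_sq_add_cos_sq t
      simp
    exact (pow_left_inj₀ (norm_nonneg _) zero_le_one two_ne_zero).1 (by rw [h1]; ring)
  set e : ℝ := MvPolynomial.eval (fun i => x i) p / M ^ 2 with he
  have heM : |e| * M = 1 := by
    rw [he, abs_div, hxM, abs_of_pos (by positivity)]; field_simp
  set p' := MvPolynomial.C e * p with hp'
  have hev : ∀ f : ι → ℝ, MvPolynomial.eval f p' = e * MvPolynomial.eval f p := by
    intro f; simp [hp']
  have hp'd : p'.totalDegree ≤ n := by
    refine (MvPolynomial.totalDegree_mul _ _).trans ?_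
    simpa using hp
  have := trig_near_max n (by omega) _ _ (isTrig_circle n p' hp'd x u)
    (fun t => (differentiable_circle p' x u t).hasDerivAt) (by
      intro t
      rw [hev, abs_mul, ← heM]
      refine mul_le_mul_of_nonneg_left ?_ (abs_nonneg _)
      simpa using hb _ (hγ t)) (by
      simp only [hev, cos_zero, sin_zero, one_mul, zero_mul, add_zero]
      rw [he, div_mul_eq_mul_div, ← sq, ← sq_abs, hxM]
      field_simp) θ hθ0.le hnθ
  rw [hev] at this
  have hyy : (fun i => cos θ * x i + sin θ * u i) = fun i => y i := by
    ext i
    conv_rhs => rw [hyu]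
    simp
  rw [hyy] at this
  have h3 := this.trans (le_abs_self _)
  rw [abs_mul] at h3
  have : |e| * (1 / 2 * M) ≤ |e| * |MvPolynomial.eval (fun i => y i) p| := by
    calc _ = 1 / 2 * (|e| * M) := by ring
      _ ≤ _ := by rw [heM]; linarith
  refine le_of_mul_le_mul_left this ?_
  by_contra h0
  have : |e| = 0 := le_antisymm (not_lt.1 h0) (abs_nonneg _)
  rw [this] at heM; simp at heM

theorem greedy_step {X : Type*} [PseudoMetricSpace X] [SecondCountableTopology X]
    [MeasurableSpace X] [BorelSpace X] (μ : Measure X) [IsProbabilityMeasure μ] (r v : ℝ)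
    (hv0 : 0 ≤ v) (hv : ∀ x, v ≤ μ.real (Metric.ball x r)) (U : Set X) (hU : MeasurableSet U) :
    ∃ x, v * μ.real U ≤ μ.real (U ∩ Metric.ball x r) := by
  set S : Set (X × X) := {q | q.2 ∈ U ∧ dist q.2 q.1 < r} with hS
  have hSm : MeasurableSet S :=
    (measurable_snd hU).inter (measurableSet_lt (measurable_snd.dist measurable_fst) measurable_const)
  have h1 := Measure.prod_apply (μ := μ) (ν := μ) hSm
  have h2 := Measure.prod_apply_symm (μ := μ) (ν := μ) hSm
  obtain ⟨x, hx⟩ := exists_lintegral_le (μ := μ) (f := fun x => μ (Prod.mk x ⁻¹' S))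
    (by rw [← h1]; exact measure_ne_top _ _)
  refine ⟨x, ?_⟩
  rw [← h1, h2] at hx
  have hx' : Prod.mk x ⁻¹' S = U ∩ Metric.ball x r := by
    ext y; simp [hS, Metric.mem_ball]
  rw [hx'] at hx
  have h3 : ENNReal.ofReal v * μ U ≤ ∫⁻ y, μ ((fun x => (x, y)) ⁻¹' S) ∂μ := by
    rw [← lintegral_indicator_const hU]
    refine lintegral_mono fun y => ?_
    by_cases hy : y ∈ U
    · rw [indicator_of_mem hy]
      have : (fun x => (x, y)) ⁻¹' S = Metric.ball y r := by
        ext z; simp [hS, Metric.mem_ball, hy, dist_comm]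
      rw [this]
      exact ENNReal.ofReal_le_of_le_toReal (hv y)
    · rw [indicator_of_notMem hy]; exact zero_le
  have h4 := ENNReal.toReal_mono (measure_ne_top _ _) (h3.trans hx)
  rwa [ENNReal.toReal_mul, ENNReal.toReal_ofReal hv0] at h4

theorem greedy_cover {X : Type*} [PseudoMetricSpace X] [SecondCountableTopology X]
    [MeasurableSpace X] [BorelSpace X] (μ : Measure X) [IsProbabilityMeasure μ] (r v : ℝ)
    (hv0 : 0 ≤ v) (hv1 : v ≤ 1) (hv : ∀ x, v ≤ μ.real (Metric.ball x r)) (k : ℕ) :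
    ∃ F : Finset X, F.card ≤ k ∧ μ.real (⋃ z ∈ F, Metric.ball z r)ᶜ ≤ (1 - v) ^ k := by
  classical
  induction k with
  | zero => exact ⟨∅, by simp, by simp⟩
  | succ k ih =>
    obtain ⟨F, hF, hFm⟩ := ih
    set V := ⋃ z ∈ F, Metric.ball z r with hV
    have hVm : MeasurableSet V := Finset.measurableSet_biUnion _ fun z _ => measurableSet_ball
    obtain ⟨x, hx⟩ := greedy_step μ r v hv0 hv Vᶜ hVm.compl
    refine ⟨insert x F, (Finset.card_insert_le _ _).trans (by omega), ?_⟩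
    have h1 := measureReal_inter_add_sdiff (μ := μ) (s := Vᶜ) (t := Metric.ball x r)
      measurableSet_ball
    have h2 : (⋃ z ∈ insert x F, Metric.ball z r)ᶜ = Vᶜ \ Metric.ball x r := by
      rw [Finset.set_biUnion_insert, compl_union, inter_comm, sdiff_eq]
    rw [h2, pow_succ]
    have : 0 ≤ 1 - v := by linarith
    nlinarith

theorem covering {X : Type*} [PseudoMetricSpace X] [SecondCountableTopology X]
    [MeasurableSpace X] [BorelSpace X] (μ : Measure X) [IsProbabilityMeasure μ] (r s v w K : ℝ)
    (hs0 : 0 ≤ s) (hsr : s ≤ r)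
    (hv0 : 0 < v) (hv : ∀ x, v ≤ μ.real (Metric.ball x r))
    (hw0 : 0 < w) (hw : ∀ x, w ≤ μ.real (Metric.ball x s)) (hK : 0 ≤ K) :
    ∃ F : Finset X, (F.card : ℝ) ≤ K / v + 1 + exp (-K) / w ∧
      ∀ x, ∃ z ∈ F, dist x z ≤ r + s := by
  classical
  have hne : Nonempty X := μ.nonempty_of_neZero
  obtain ⟨x0⟩ := hne
  have hv1 : v ≤ 1 := (hv x0).trans measureReal_le_one
  obtain ⟨F, hFc, hFm⟩ := greedy_cover μ r v hv0.le hv1 hv ⌈K / v⌉₊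
  set V := ⋃ z ∈ F, Metric.ball z r with hV
  have hVK : μ.real Vᶜ ≤ exp (-K) := by
    refine hFm.trans ?_
    calc (1 - v) ^ ⌈K / v⌉₊ ≤ exp (-v) ^ ⌈K / v⌉₊ :=
          pow_le_pow_left₀ (by linarith) (Real.one_sub_le_exp_neg v) _
      _ = exp (-(v * ⌈K / v⌉₊)) := by rw [← Real.exp_nat_mul]; ring_nf
      _ ≤ exp (-K) := by
        apply Real.exp_le_exp.2
        have := Nat.le_ceil (K / v)
        rw [div_le_iff₀ hv0] at this
        linarith
  let Q : Finset X → Prop := fun Y => (Y : Set X).PairwiseDisjoint (fun y => Metric.ball y s) ∧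
    ∀ y ∈ Y, Metric.ball y s ⊆ Vᶜ
  have hQ : ∀ Y, Q Y → (Y.card : ℝ) ≤ exp (-K) / w := by
    intro Y hY
    rw [le_div_iff₀ hw0]
    calc (Y.card : ℝ) * w = ∑ _y ∈ Y, w := by simp
      _ ≤ ∑ y ∈ Y, μ.real (Metric.ball y s) := Finset.sum_le_sum fun y _ => hw y
      _ = μ.real (⋃ y ∈ Y, Metric.ball y s) :=
        (measureReal_biUnion_finset hY.1 fun _ _ => measurableSet_ball).symm
      _ ≤ μ.real Vᶜ := measureReal_mono (iUnion₂_subset hY.2)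
      _ ≤ _ := hVK
  have hmem := Nat.sSup_mem (s := {k | ∃ Y, Q Y ∧ Y.card = k}) ⟨0, ∅, by simp [Q], rfl⟩
    ⟨⌊exp (-K) / w⌋₊, by rintro k ⟨Y, hY, rfl⟩; exact Nat.le_floor (hQ Y hY)⟩
  obtain ⟨Y, hY, hYc⟩ := hmem
  have hmax : ∀ Z, Q Z → Z.card ≤ Y.card := by
    intro Z hZ
    rw [hYc]
    exact le_csSup ⟨⌊exp (-K) / w⌋₊, by rintro k ⟨Y, hY, rfl⟩; exact Nat.le_floor (hQ Y hY)⟩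
      ⟨Z, hZ, rfl⟩
  refine ⟨F ∪ Y, ?_, ?_⟩
  · have h1 : ((F ∪ Y).card : ℝ) ≤ F.card + Y.card := by exact_mod_cast Finset.card_union_le _ _
    have h2 : (F.card : ℝ) ≤ ⌈K / v⌉₊ := by exact_mod_cast hFc
    have h3 := (Nat.ceil_lt_add_one (div_nonneg hK hv0.le)).le
    have h4 := hQ Y hY
    linarith
  · intro x
    by_cases hx : Metric.ball x s ⊆ Vᶜ
    · by_cases hxY : x ∈ Y
      · exact ⟨x, Finset.mem_union_right _ hxY, by rw [dist_self]; linarith⟩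
      by_cases hd : ∀ y ∈ Y, Disjoint (Metric.ball x s) (Metric.ball y s)
      · exfalso
        have := hmax (insert x Y) ⟨by
          rw [Finset.coe_insert, pairwiseDisjoint_insert_of_notMem (by exact_mod_cast hxY)]
          exact ⟨hY.1, fun y hy => hd y (by exact_mod_cast hy)⟩, by
          intro y hy
          rcases Finset.mem_insert.1 hy with rfl | hy
          · exact hx
          · exact hY.2 y hy⟩
        rw [Finset.card_insert_of_notMem hxY] at this
        omega
      · push Not at hd
        obtain ⟨y, hy, hyd⟩ := hd
        obtain ⟨a, ha, hb⟩ := Set.not_disjoint_iff.1 hyd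
        refine ⟨y, Finset.mem_union_right _ hy, ?_⟩
        rw [Metric.mem_ball] at ha hb
        have := dist_triangle_left x y a
        linarith
    · obtain ⟨a, ha, hb⟩ := Set.not_subset.1 hx
      rw [notMem_compl_iff, hV, mem_iUnion₂] at hb
      obtain ⟨z, hz, hza⟩ := hb
      refine ⟨z, Finset.mem_union_left _ hz, ?_⟩
      rw [Metric.mem_ball] at ha hza
      have := dist_triangle_left x z a
      linarith

/-- Splitting off the first coordinate. -/
noncomputable def splitFst (d : ℕ) (y : EuclideanSpace ℝ (Fin (d + 1))) : ℝ × EuclideanSpace ℝ (Fin d) :=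
  (y 0, WithLp.toLp 2 fun i => y i.succ)

theorem splitFst_mp (d : ℕ) : MeasurePreserving (splitFst d) volume volume := by
  have h1 := PiLp.volume_preserving_ofLp (Fin (d + 1))
  have h2 := volume_preserving_piFinSuccAbove (fun _ : Fin (d + 1) => ℝ) 0
  have h3 : MeasurePreserving (Prod.map (id : ℝ → ℝ) (WithLp.toLp 2 : (Fin d → ℝ) → EuclideanSpace ℝ (Fin d)))
      (volume.prod volume) (volume.prod volume) :=
    (MeasurePreserving.id volume).prod (PiLp.volume_preserving_toLp (Fin d))
  exact h3.comp (h2.comp h1)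

theorem splitFst_norm (d : ℕ) (y : EuclideanSpace ℝ (Fin (d + 1))) :
    ‖y‖ ^ 2 = (splitFst d y).1 ^ 2 + ‖(splitFst d y).2‖ ^ 2 := by
  rw [EuclideanSpace.norm_sq_eq, EuclideanSpace.norm_sq_eq, Fin.sum_univ_succ]
  simp [splitFst]

theorem cyl_volume (d : ℕ) (a b ρ : ℝ) (hab : a ≤ b) (hρ : 0 < ρ) :
    volume.real (splitFst d ⁻¹' (Ioo a b ×ˢ Metric.ball 0 ρ)) =
      (b - a) * (ρ ^ d * volume.real (Metric.ball (0 : EuclideanSpace ℝ (Fin d)) 1)) := by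
  rw [measureReal_def, (splitFst_mp d).measure_preimage
    (measurableSet_Ioo.prod measurableSet_ball).nullMeasurableSet, Measure.volume_eq_prod,
    Measure.prod_prod, Real.volume_Ioo, Measure.addHaar_ball_of_pos _ _ hρ, finrank_euclideanSpace_fin,
    ENNReal.toReal_mul, ENNReal.toReal_mul, ENNReal.toReal_ofReal (by linarith),
    ENNReal.toReal_ofReal (by positivity), measureReal_def]

theorem unit_ball_le (d : ℕ) : volume.real (Metric.ball (0 : EuclideanSpace ℝ (Fin (d + 1))) 1) ≤
    2 * volume.real (Metric.ball (0 : EuclideanSpace ℝ (Fin d)) 1) := by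
  have h := cyl_volume d (-1) 1 1 (by norm_num) one_pos
  rw [one_pow, one_mul] at h
  rw [show (2 : ℝ) = 1 - -1 by norm_num, ← h]
  refine measureReal_mono ?_ ?_
  · intro y hy
    have hy1 : ‖y‖ < 1 := by simpa using hy
    have hn := splitFst_norm d y
    have hy2 : ‖y‖ ^ 2 < 1 := by nlinarith [norm_nonneg y]
    refine ⟨?_, ?_⟩
    · rw [mem_Ioo, ← abs_lt, ← sq_lt_one_iff_abs_lt_one]
      nlinarith [sq_nonneg ‖(splitFst d y).2‖]
    · rw [mem_ball_zero_iff]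
      nlinarith [sq_nonneg (splitFst d y).1, norm_nonneg (splitFst d y).2]
  · rw [(splitFst_mp d).measure_preimage
      (measurableSet_Ioo.prod measurableSet_ball).nullMeasurableSet, Measure.volume_eq_prod,
      Measure.prod_prod, Real.volume_Ioo]
    exact ENNReal.mul_ne_top ENNReal.ofReal_ne_top measure_ball_lt_top.ne

theorem mem_cap (d : ℕ) (x y : EuclideanSpace ℝ (Fin (d + 1))) (hx : ‖x‖ = 1) (r h t s : ℝ)
    (hr : 0 < r) (hh : 0 < h) (ht : h < t) (hs0 : 0 ≤ s) (hs : s < r * h)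
    (hin : ⟪x, y⟫ = t) (hn : ‖y‖ ^ 2 = t ^ 2 + s ^ 2) : ‖‖y‖⁻¹ • y - x‖ < r := by
  have ht0 : 0 < t := hh.trans ht
  have hst : s < r * t := hs.trans (by gcongr)
  have hY : 0 < ‖y‖ := by
    rcases (norm_nonneg y).eq_or_lt with h0 | h0
    · rw [← h0] at hn; nlinarith
    · exact h0
  have hW : t ≤ ‖y‖ := by nlinarith
  set W := ‖y‖ / t with hWd
  have hW1 : 1 ≤ W := by rw [hWd, le_div_iff₀ ht0]; linarith
  have hW2 : W ^ 2 < 1 + r ^ 2 := by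
    rw [hWd, div_pow, div_lt_iff₀ (by positivity), hn]
    nlinarith
  have h1 : ‖‖y‖⁻¹ • y - x‖ ^ 2 = 2 - 2 / W := by
    rw [norm_sub_sq_real, norm_smul, norm_inv, norm_norm, inv_mul_cancel₀ hY.ne', hx,
      real_inner_smul_left, real_inner_comm, hin, hWd]
    field_simp
    ring
  have h2 : 2 - 2 / W ≤ W ^ 2 - 1 := by
    have : 0 < W := by linarith
    rw [sub_le_iff_le_add, ← sub_le_iff_le_add', le_div_iff₀ this]
    nlinarith [mul_nonneg (sq_nonneg (W - 1)) (by linarith : 0 ≤ W + 2)]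
  have h3 : ‖‖y‖⁻¹ • y - x‖ ^ 2 < r ^ 2 := by linarith
  exact lt_of_pow_lt_pow_left₀ 2 hr.le h3

open scoped Pointwise in
theorem cap_measure (d : ℕ) (hd : 1 ≤ d) (x : Sph d) (r : ℝ) (hr : 0 < r) (hrd : r ^ 2 ≤ 1 / (4 * d)) :
    r ^ d / (16 * d) ≤ (sphMeasure d).real (Metric.ball x r) := by
  have hd1 : (1 : ℝ) ≤ d := by exact_mod_cast hd
  have hd0 : (0 : ℝ) < d := by linarith
  set κ := volume.real (Metric.ball (0 : EuclideanSpace ℝ (Fin d)) 1) with hκ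
  have hκ0 : 0 < κ := by
    rw [hκ, measureReal_def]
    exact ENNReal.toReal_pos (Metric.measure_ball_pos _ _ one_pos).ne' measure_ball_lt_top.ne
  set e0 : EuclideanSpace ℝ (Fin (d + 1)) := EuclideanSpace.single 0 1 with he0
  have hxn : ‖(x : EuclideanSpace ℝ (Fin (d + 1)))‖ = 1 := by simp
  have hen : ‖e0‖ = 1 := by simp [he0]
  obtain ⟨L, hL⟩ : ∃ L : EuclideanSpace ℝ (Fin (d + 1)) ≃ₗᵢ[ℝ] EuclideanSpace ℝ (Fin (d + 1)),
      L x = e0 := ⟨_, Submodule.reflection_sub (hxn.trans hen.symm)⟩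
  set h : ℝ := 1 - 1 / (2 * d) with hh
  set H : ℝ := 1 - 1 / (4 * d) with hH
  have hi1 : 1 / (4 * (d : ℝ)) ≤ 1 / 4 := by
    apply one_div_le_one_div_of_le <;> linarith
  have hi2 : 1 / (2 * (d : ℝ)) = 2 * (1 / (4 * (d : ℝ))) := by field_simp; norm_num
  have hi0 : 0 < 1 / (4 * (d : ℝ)) := by positivity
  have hh0 : 0 < h := by rw [hh, hi2]; linarith
  have hh1 : h ≤ 1 := by rw [hh, hi2]; linarith
  have hHh : H - h = 1 / (4 * d) := by rw [hh, hH, hi2]; ring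
  have hρ : 0 < r * h := by positivity
  have hcyl := cyl_volume d h H (r * h) (by linarith) hρ
  set Q := splitFst d ⁻¹' (Ioo h H ×ˢ Metric.ball 0 (r * h)) with hQ
  have hQL : volume.real (L ⁻¹' Q) = volume.real Q := by
    rw [measureReal_def, L.measurePreserving.measure_preimage
      ((splitFst_mp d).measurable (measurableSet_Ioo.prod measurableSet_ball)).nullMeasurableSet,
      measureReal_def]
  have hsub : L ⁻¹' Q ⊆ Ioo (0 : ℝ) 1 • (Subtype.val '' (Metric.ball x r)) := by
    intro y hy
    obtain ⟨⟨ht1, ht2⟩, hs⟩ := (hy : splitFst d (L y) ∈ (Ioo h H ×ˢ Metric.ball 0 (r * h) : Set (ℝ × EuclideanSpace ℝ (Fin d))))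
    rw [mem_ball_zero_iff] at hs
    have hn := splitFst_norm d (L y)
    rw [L.norm_map] at hn
    have hin : ⟪(x : EuclideanSpace ℝ (Fin (d + 1))), y⟫ = (splitFst d (L y)).1 := by
      rw [← L.inner_map_map, hL, he0, EuclideanSpace.inner_single_left]
      simp [splitFst]
    set t := (splitFst d (L y)).1
    set s := ‖(splitFst d (L y)).2‖ with hsdef
    have hs0 : 0 ≤ s := norm_nonneg _
    have hcap := mem_cap d x y hxn r h t s hr hh0 ht1 hs0 hs hin hn
    have hY : 0 < ‖y‖ := by
      rcases (norm_nonneg y).eq_or_lt with h0 | h0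
      · rw [← h0] at hn
        have h7 : 0 < t ^ 2 := pow_pos (hh0.trans ht1) 2
        have h8 := sq_nonneg s
        norm_num at hn
        linarith
      · exact h0
    have hY1 : ‖y‖ < 1 := by
      have hsr : s < r := hs.trans_le (mul_le_of_le_one_right hr.le hh1)
      have h5 : s ^ 2 < 1 / (4 * d) :=
        lt_of_lt_of_le (pow_lt_pow_left₀ hsr hs0 two_ne_zero) hrd
      have ht2' : t ^ 2 < H ^ 2 := pow_lt_pow_left₀ ht2 (hh0.trans ht1).le two_ne_zero
      have hH2 : H ^ 2 ≤ 1 - 1 / (4 * d) := by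
        have hH0 : 0 ≤ H := (hh0.trans (ht1.trans ht2)).le
        calc H ^ 2 = H * H := sq H
          _ ≤ 1 * H := mul_le_mul_of_nonneg_right (by rw [hH]; linarith) hH0
          _ = _ := by rw [one_mul, hH]
      have h6 : ‖y‖ ^ 2 < 1 ^ 2 := by rw [hn, one_pow]; linarith
      exact lt_of_pow_lt_pow_left₀ 2 zero_le_one h6
    refine Set.mem_smul.2 ⟨‖y‖, ⟨hY, hY1⟩, ‖y‖⁻¹ • y, ⟨⟨‖y‖⁻¹ • y, ?_⟩, ?_, rfl⟩, ?_⟩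
    · simp [norm_smul, hY.ne']
    · rw [Metric.mem_ball, Subtype.dist_eq, dist_eq_norm]; exact hcap
    · rw [smul_smul, mul_inv_cancel₀ hY.ne', one_smul]
  have htop : volume (Ioo (0 : ℝ) 1 • (Subtype.val '' (Metric.ball x r)) :
      Set (EuclideanSpace ℝ (Fin (d + 1)))) ≠ ⊤ := by
    refine ((measure_mono ?_).trans_lt (measure_ball_lt_top
      (x := (0 : EuclideanSpace ℝ (Fin (d + 1)))) (r := 1))).ne
    intro y hy
    obtain ⟨a, ha, b, ⟨b', _, rfl⟩, rfl⟩ := Set.mem_smul.1 hy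
    have : ‖(b' : EuclideanSpace ℝ (Fin (d + 1)))‖ = 1 := by simpa using b'.2
    rw [mem_ball_zero_iff, norm_smul, this, mul_one, Real.norm_of_nonneg ha.1.le]
    exact ha.2
  have hmono := measureReal_mono hsub htop
  have hb := unit_ball_le d
  have hbpos : 0 < volume.real (Metric.ball (0 : EuclideanSpace ℝ (Fin (d + 1))) 1) := by
    rw [measureReal_def]
    exact ENNReal.toReal_pos (Metric.measure_ball_pos _ _ one_pos).ne' measure_ball_lt_top.ne
  have hval : (sphMeasure d).real (Metric.ball x r) =
      (volume.real (Metric.ball (0 : EuclideanSpace ℝ (Fin (d + 1))) 1))⁻¹ *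
      volume.real (Ioo (0 : ℝ) 1 • (Subtype.val '' (Metric.ball x r)) :
      Set (EuclideanSpace ℝ (Fin (d + 1)))) := by
    rw [sphMeasure, measureReal_def, Measure.smul_apply, Measure.toSphere_apply_univ,
      Measure.toSphere_apply' _ measurableSet_ball, finrank_euclideanSpace_fin, smul_eq_mul,
      ENNReal.toReal_mul, ENNReal.toReal_inv, ENNReal.toReal_mul, ENNReal.toReal_mul,
      measureReal_def, measureReal_def]
    have : (((d + 1 : ℕ) : ENNReal)).toReal ≠ 0 := by
      rw [ENNReal.toReal_natCast]; positivity
    rw [mul_inv]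
    field_simp
  have hbern : 1 / 2 ≤ h ^ d := by
    have := one_add_mul_le_pow (a := -(1 / (2 * (d : ℝ)))) (by rw [hi2]; linarith) d
    calc (1 : ℝ) / 2 = 1 + d * -(1 / (2 * d)) := by field_simp; norm_num
      _ ≤ _ := this
      _ = h ^ d := by rw [hh]; ring_nf
  rw [hval, le_inv_mul_iff₀ hbpos]
  calc _ ≤ 2 * κ * (r ^ d / (16 * d)) := by gcongr
    _ = 1 / (4 * d) * (r ^ d * (1 / 2) * κ) := by field_simp; norm_num
    _ ≤ 1 / (4 * d) * (r ^ d * h ^ d * κ) := by gcongr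
    _ = volume.real (L ⁻¹' Q) := by rw [hQL, hcyl, hHh, mul_pow]
    _ ≤ _ := hmono

instance sphMeasure_prob (d : ℕ) : IsProbabilityMeasure (sphMeasure d) := by
  constructor
  rw [sphMeasure, Measure.smul_apply, smul_eq_mul]
  refine ENNReal.inv_mul_cancel ?_ (measure_ne_top _ _)
  rw [Measure.measure_univ_ne_zero]
  exact Measure.toSphere_ne_zero _

theorem exists_growth_const : ∃ c : ℝ, 0 < c ∧ ∀ d : ℕ, (d : ℝ) ^ 2 * (3 / 10 * π) ^ d ≤ c := by
  have h := tendsto_pow_const_mul_const_pow_of_abs_lt_one 2 (r := 3 / 10 * π) (by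
    rw [abs_of_pos (by have := pi_pos; positivity)]
    have := pi_lt_d2
    linarith)
  obtain ⟨c, hc⟩ := h.bddAbove_range
  exact ⟨max c 1, by positivity, fun d => (hc ⟨d, rfl⟩).trans (le_max_left _ _)⟩

theorem exp_neg_le (d : ℕ) : exp (-(2 * (d : ℝ))) ≤ (1 / 5) ^ d := by
  have h : exp (-2) ≤ 1 / 5 := by
    rw [Real.exp_neg, one_div]
    apply inv_anti₀ (by norm_num)
    have h1 := Real.exp_one_gt_d9
    have : exp 2 = exp 1 * exp 1 := by rw [← Real.exp_add]; norm_num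
    rw [this]; nlinarith
  calc exp (-(2 * (d : ℝ))) = exp (-2) ^ d := by rw [← Real.exp_nat_mul]; ring_nf
    _ ≤ _ := pow_le_pow_left₀ (Real.exp_pos _).le h _

theorem sphere_cover (d n : ℕ) (hd : 1 ≤ d) (hn : 1 ≤ n) (hdn : 4 * (d : ℝ) ≤ (n : ℝ) ^ 2) :
    ∃ F : Finset (Sph d), (F.card : ℝ) ≤ 49 * (d : ℝ) ^ 2 * (6 / 5 * n) ^ d ∧
      ∀ x, ∃ z ∈ F, dist x z ≤ 1 / n := by
  have hd1 : (1 : ℝ) ≤ d := by exact_mod_cast hd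
  have hd0 : (0 : ℝ) < d := by linarith
  have hn1 : (1 : ℝ) ≤ n := by exact_mod_cast hn
  have hn0 : (0 : ℝ) < n := by linarith
  have hR : (1 / (n : ℝ)) ^ 2 ≤ 1 / (4 * d) := by
    rw [div_pow, one_pow]
    exact one_div_le_one_div_of_le (by positivity) hdn
  have hq : ∀ a : ℝ, 0 < a → a ≤ 1 → (a / n) ^ 2 ≤ 1 / (4 * (d : ℝ)) := by
    intro a ha0 ha
    refine le_trans ?_ hR
    gcongr
  obtain ⟨F, hF, hcov⟩ := covering (sphMeasure d) ((5 / 6) / n) ((1 / 6) / n)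
    (((5 / 6) / n) ^ d / (16 * d)) (((1 / 6) / n) ^ d / (16 * d)) (2 * d)
    (by positivity) (by gcongr; norm_num) (by positivity)
    (fun x => cap_measure d hd x _ (by positivity) (hq _ (by norm_num) (by norm_num)))
    (by positivity)
    (fun x => cap_measure d hd x _ (by positivity) (hq _ (by norm_num) (by norm_num)))
    (by positivity)
  refine ⟨F, hF.trans ?_, fun x => ?_⟩
  · have e1 : 2 * (d : ℝ) / (((5 / 6) / n) ^ d / (16 * d)) = 32 * d ^ 2 * (6 / 5 * n) ^ d := by
      rw [show ((6 : ℝ) / 5 * n) = ((5 / 6) / (n : ℝ))⁻¹ by field_simp, inv_pow]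
      field_simp
      norm_num
    have e2 : exp (-(2 * (d : ℝ))) / (((1 / 6) / n) ^ d / (16 * d)) ≤ 16 * d * (6 / 5 * n) ^ d := by
      rw [div_le_iff₀ (by positivity)]
      refine (exp_neg_le d).trans (le_of_eq ?_)
      rw [show ((1 : ℝ) / 5) = (6 / 5 * (n : ℝ)) * ((1 / 6) / (n : ℝ)) by field_simp, mul_pow]
      field_simp
    have e3 : 1 ≤ (6 / 5 * (n : ℝ)) ^ d := one_le_pow₀ (by linarith)
    rw [e1]
    have e4 : (d : ℝ) ≤ d ^ 2 := by nlinarith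
    have e5 : 16 * (d : ℝ) * (6 / 5 * n) ^ d ≤ 16 * d ^ 2 * (6 / 5 * n) ^ d := by gcongr
    have e6 : 1 ≤ (d : ℝ) ^ 2 * (6 / 5 * n) ^ d := by nlinarith
    linarith
  · obtain ⟨z, hz, hxz⟩ := hcov x
    refine ⟨z, hz, hxz.trans (le_of_eq ?_)⟩
    field_simp
    norm_num

/-- Norming set for `Π_n^d`: there is a set `𝒞` of `O(d^{1/2}(4n/π)^d)` points such that
`(1/2)·sup_{S^d}|P| ≤ max_{z ∈ 𝒞} |P z| ≤ sup_{S^d}|P|` for all `P ∈ Π_n^d`. -/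
theorem sphere_norming_set :
    ∃ C c : ℝ, 0 < C ∧ 0 < c ∧
      ∀ (d n : ℕ), 1 ≤ d → (d : ℝ) ^ ((1 : ℝ)/2) * Real.pi / (4 * C) ≤ (n : ℝ) →
        ∃ 𝒞 : Finset (Sph d),
          (𝒞.card : ℝ) ≤ c * (d : ℝ) ^ ((1 : ℝ)/2) * (4 * (n : ℝ) / Real.pi) ^ d ∧
          ∀ P : Sph d → ℝ, IsSphPoly d n P →
            (∃ z ∈ 𝒞, (1 / 2) * supNorm P ≤ |P z|) ∧ ∀ z ∈ 𝒞, |P z| ≤ supNorm P := by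
  obtain ⟨c, hc0, hc⟩ := exists_growth_const
  refine ⟨π / 8, 49 * c, by positivity, by positivity, fun d n hd hdn => ?_⟩
  have hd1 : (1 : ℝ) ≤ d := by exact_mod_cast hd
  rw [← Real.sqrt_eq_rpow] at *
  have hsq1 : 1 ≤ √(d : ℝ) := Real.one_le_sqrt.2 hd1
  have hdn2 : 2 * √(d : ℝ) ≤ n := by
    refine le_trans (le_of_eq ?_) hdn
    field_simp
    norm_num
  have hdn3 : 4 * (d : ℝ) ≤ (n : ℝ) ^ 2 := by
    have := Real.sq_sqrt (show (0 : ℝ) ≤ d by linarith)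
    nlinarith
  have hn2 : 2 ≤ n := by
    have : (2 : ℝ) ≤ n := by linarith
    exact_mod_cast this
  obtain ⟨F, hF, hcov⟩ := sphere_cover d n hd (by omega) hdn3
  refine ⟨F, hF.trans ?_, fun P hP => ?_⟩
  · have e : (6 / 5 * (n : ℝ)) ^ d = (3 / 10 * π) ^ d * (4 * n / π) ^ d := by
      rw [← mul_pow]; congr 1; field_simp; norm_num
    rw [e]
    calc 49 * (d : ℝ) ^ 2 * ((3 / 10 * π) ^ d * (4 * n / π) ^ d)
        = 49 * ((d : ℝ) ^ 2 * (3 / 10 * π) ^ d) * 1 * (4 * n / π) ^ d := by ring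
      _ ≤ 49 * c * √(d : ℝ) * (4 * n / π) ^ d := by
        gcongr
        exact hc d
  · obtain ⟨p, hp, hPp⟩ := hP
    have hpd : p.totalDegree ≤ n := by
      have : p.totalDegree < n := by exact_mod_cast hp
      exact this.le
    have hcont : Continuous P := by
      have : P = fun y : Sph d =>
          MvPolynomial.eval (fun i => (y : EuclideanSpace ℝ (Fin (d + 1))) i) p := funext hPp
      rw [this]
      simp only [MvPolynomial.eval_eq']
      fun_prop
    haveI : CompactSpace (Sph d) := isCompact_iff_compactSpace.1 (isCompact_sphere _ _)
    haveI : Nonempty (Sph d) := (sphMeasure d).nonempty_of_neZero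
    obtain ⟨x, -, hx⟩ := isCompact_univ.exists_isMaxOn (univ_nonempty (α := Sph d))
      hcont.abs.continuousOn
    have hmax : ∀ y, |P y| ≤ |P x| := fun y => hx (mem_univ y)
    have hsup : supNorm P = |P x| := by
      unfold supNorm
      exact IsGreatest.csSup_eq ⟨⟨x, rfl⟩, by rintro _ ⟨y, rfl⟩; exact hmax y⟩
    rw [hsup]
    refine ⟨?_, fun z _ => hmax z⟩
    obtain ⟨z, hz, hxz⟩ := hcov x
    refine ⟨z, hz, ?_⟩
    rcases (abs_nonneg (P x)).eq_or_lt with h0 | h0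
    · rw [← h0]; simp
    rw [hPp z]
    refine sphere_near_max n hn2 p hpd |P x| h0 ?_ x z (by simp) (by simp) (by rw [hPp x]) ?_
    · intro y hy
      have := hmax ⟨y, by simpa using hy⟩
      rwa [hPp] at this
    · rwa [Subtype.dist_eq, dist_eq_norm] at hxz
end
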